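/- Deleting the first letter gives a bijection between {π ∈ S_n : π avoids 23-1, π_1 = a, π_2 = b} with a > b and {τ ∈ S_{n−1} : τ avoids 23-1, τ_1 = b}, for any 1 ≤ b < a ≤ n. -/

import Mathlib

/-- The positions of the prefix indices `R` inside `Fin n`. -/
def prefIndices {n k : ℕ} (h : k ≤ n) (R : Finset (Fin k)) : Finset (Fin n) :=
  R.map (Fin.castLEEmb h)

/-- The deletion map `d_R`: delete the letters of `π` at the (prefix) positions in `R`
and reduce, yielding a permutation of length `n - |R|`. -/
def deletePerm {n k : ℕ} (h : k ≤ n) (R : Finset (Fin k)) (π : Equiv.Perm (Fin n)) :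
    Equiv.Perm (Fin (n - R.card)) :=
  ((prefIndices h R)ᶜ.orderIsoOfFin
      (by simp [prefIndices, Finset.card_compl])).toEquiv.trans
    ((π.subtypeEquiv (fun x => by
        simp [prefIndices, Finset.mem_compl, Finset.mem_image])).trans
      (((prefIndices h R).image π)ᶜ.orderIsoOfFin
        (by simp [prefIndices, Finset.card_compl,
              Finset.card_image_of_injective _ π.injective])).toEquiv.symm)

/-- Containment of 23-1. -/
def Contains23d1 {n : ℕ} (π : Equiv.Perm (Fin n)) : Prop :=
  ∃ (i j : Fin n) (h : (i : ℕ) + 1 < n), (i : ℕ) + 1 < (j : ℕ) ∧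
    π j < π i ∧ π i < π ⟨(i : ℕ) + 1, h⟩

/-!
Once the deleted letter `p` is known, deletion is inverted by reinserting `p`, so deleting the
first letter is a bijection from `{π | π₁ = p}` onto all shorter permutations. The letters playing
`2` and `3` in an occurrence of `23-1` are adjacent, so an occurrence using the first letter forces
`π₁ < π₂`; when `π₁ > π₂` every occurrence therefore survives the deletion.
-/

theorem orderEmbOfFin_deletePerm {n k : ℕ} (h : k ≤ n) (R : Finset (Fin k))
    (π : Equiv.Perm (Fin n)) (hpos : (prefIndices h R)ᶜ.card = n - R.card)
    (hval : ((prefIndices h R).image π)ᶜ.card = n - R.card) (i : Fin (n - R.card)) :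
    ((prefIndices h R).image π)ᶜ.orderEmbOfFin hval (deletePerm h R π i) =
      π ((prefIndices h R)ᶜ.orderEmbOfFin hpos i) := by
  rw [← Finset.coe_orderIsoOfFin_apply, ← Finset.coe_orderIsoOfFin_apply]
  simp [deletePerm]

section

variable {m : ℕ}

/-- The deletion map for the single position `i`, with its length `(m + 1) - |{i}|` written as `m`
(the two are definitionally equal). -/
def deleteLetter (i : Fin (m + 1)) (π : Equiv.Perm (Fin (m + 1))) : Equiv.Perm (Fin m) :=
  deletePerm le_rfl {i} π

theorem succAbove_deleteLetter (i : Fin (m + 1)) (π : Equiv.Perm (Fin (m + 1))) (k : Fin m) :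
    (π i).succAbove (deleteLetter i π k) = π (i.succAbove k) := by
  have hpos : prefIndices (le_refl (m + 1)) {i} = {i} := Finset.map_singleton _ _
  have hdel (l : Fin (m + 1 - ({i} : Finset (Fin (m + 1))).card)) :
      (π i).succAbove (Fin.cast (by simp) (deletePerm le_rfl {i} π l)) =
        π (i.succAbove (Fin.cast (by simp) l)) := by
    simpa only [hpos, Finset.image_singleton, Finset.orderEmbOfFin_compl_singleton_apply] using
      orderEmbOfFin_deletePerm le_rfl {i} π (by simp [hpos, Finset.card_compl])
        (by simp [hpos, Finset.card_compl]) l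
  exact hdel k

/-- The permutation with letter `p` at position `i` whose remaining letters reduce to `τ`: the
inverse of `deleteLetter i` once the deleted letter is known. -/
def insertLetter (i p : Fin (m + 1)) (τ : Equiv.Perm (Fin m)) : Equiv.Perm (Fin (m + 1)) :=
  (finSuccEquiv' i).trans ((Equiv.optionCongr τ).trans (finSuccEquiv' p).symm)

theorem insertLetter_self (i p : Fin (m + 1)) (τ : Equiv.Perm (Fin m)) :
    insertLetter i p τ i = p := by
  simp [insertLetter]

theorem insertLetter_succAbove (i p : Fin (m + 1)) (τ : Equiv.Perm (Fin m)) (k : Fin m) :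
    insertLetter i p τ (i.succAbove k) = p.succAbove (τ k) := by
  simp [insertLetter]

theorem deleteLetter_insertLetter (i p : Fin (m + 1)) (τ : Equiv.Perm (Fin m)) :
    deleteLetter i (insertLetter i p τ) = τ := by
  refine Equiv.ext fun k => Fin.succAbove_right_injective (p := p) ?_
  simpa only [insertLetter_self, insertLetter_succAbove] using
    succAbove_deleteLetter i (insertLetter i p τ) k

theorem insertLetter_deleteLetter (i : Fin (m + 1)) (π : Equiv.Perm (Fin (m + 1))) :
    insertLetter i (π i) (deleteLetter i π) = π := by
  refine Equiv.ext (Fin.succAboveCases i (insertLetter_self i _ _) fun k => ?_)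
  rw [insertLetter_succAbove, succAbove_deleteLetter]

theorem bijOn_deleteLetter (i p : Fin (m + 1)) :
    Set.BijOn (deleteLetter i) {π | π i = p} Set.univ := by
  refine Set.InvOn.bijOn (f' := insertLetter i p) ⟨?_, ?_⟩ (Set.mapsTo_univ _ _) ?_
  · rintro π rfl
    exact insertLetter_deleteLetter i π
  · exact fun τ _ => deleteLetter_insertLetter i p τ
  · exact fun τ _ => insertLetter_self i p τ

theorem deleteLetter_apply_eq_iff {i : Fin (m + 1)} {π : Equiv.Perm (Fin (m + 1))} {k c : Fin m} :
    deleteLetter i π k = c ↔ π (i.succAbove k) = (π i).succAbove c := by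
  rw [← succAbove_deleteLetter, Fin.succAbove_right_inj]

theorem deleteLetter_lt_deleteLetter_iff {i : Fin (m + 1)} {π : Equiv.Perm (Fin (m + 1))}
    {k l : Fin m} :
    deleteLetter i π k < deleteLetter i π l ↔ π (i.succAbove k) < π (i.succAbove l) := by
  rw [← succAbove_deleteLetter, ← succAbove_deleteLetter, Fin.succAbove_lt_succAbove_iff]

theorem contains23d1_iff_exists_succ (π : Equiv.Perm (Fin (m + 1))) :
    Contains23d1 π ↔
      ∃ i j : Fin m, i < j ∧ π j.succ < π i.castSucc ∧ π i.castSucc < π i.succ := by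
  constructor
  · rintro ⟨i, j, hi, hij, hji, hasc⟩
    obtain ⟨k, rfl⟩ := Fin.exists_succ_eq_of_ne_zero (Fin.ne_of_val_ne (Nat.ne_zero_of_lt hij))
    exact ⟨⟨i, Nat.lt_of_succ_lt_succ hi⟩, k, Nat.lt_of_succ_lt_succ hij, hji, hasc⟩
  · rintro ⟨i, j, hij, hji, hasc⟩
    exact ⟨i.castSucc, j.succ, Nat.succ_lt_succ i.isLt, Nat.succ_lt_succ hij, hji, hasc⟩

theorem contains23d1_iff_head_or_deleteLetter_zero (π : Equiv.Perm (Fin (m + 2))) :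
    Contains23d1 π ↔
      (∃ j : Fin (m + 1), 0 < j ∧ π j.succ < π 0 ∧ π 0 < π 1) ∨
        Contains23d1 (deleteLetter 0 π) := by
  simp [contains23d1_iff_exists_succ, Fin.exists_fin_succ (n := m),
    deleteLetter_lt_deleteLetter_iff]

theorem deleteLetter_zero_apply_zero_eq_iff {π : Equiv.Perm (Fin (m + 2))} {c : Fin (m + 1)}
    (hc : c.castSucc < π 0) : deleteLetter 0 π 0 = c ↔ π 1 = c.castSucc := by
  rw [deleteLetter_apply_eq_iff, Fin.succAbove_of_castSucc_lt _ _ hc, Fin.zero_succAbove,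
    Fin.succ_zero_eq_one]

theorem contains23d1_deleteLetter_zero_iff {π : Equiv.Perm (Fin (m + 2))}
    (h : π 1 < π 0) : Contains23d1 (deleteLetter 0 π) ↔ Contains23d1 π := by
  simp [contains23d1_iff_head_or_deleteLetter_zero π, h.not_gt]

end

/-- Deleting the first letter is a bijection from the `23-1`-avoiding permutations of
length `n` with `π₁ = a, π₂ = b`, `a > b`, to those of length `n-1` with first letter
`b` (letters written 1-based; here encoded 0-based in `Fin`). -/
theorem stmt14 {n a b : ℕ} (hb : 1 ≤ b) (hba : b < a) (han : a ≤ n) :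
    Set.BijOn (deletePerm (le_refl n) {(⟨0, by omega⟩ : Fin n)})
      {π : Equiv.Perm (Fin n) | ¬ Contains23d1 π ∧
        π ⟨0, by omega⟩ = ⟨a - 1, by omega⟩ ∧ π ⟨1, by omega⟩ = ⟨b - 1, by omega⟩}
      {τ : Equiv.Perm (Fin (n - ({(⟨0, by omega⟩ : Fin n)} : Finset (Fin n)).card)) |
        ¬ Contains23d1 τ ∧
        τ ⟨0, by simp only [Finset.card_singleton]; omega⟩ =
          ⟨b - 1, by simp only [Finset.card_singleton]; omega⟩} := by
  obtain ⟨m, rfl⟩ : ∃ m, n = m + 2 := ⟨n - 2, by omega⟩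
  let p : Fin (m + 2) := ⟨a - 1, by omega⟩
  let c : Fin (m + 1) := ⟨b - 1, by omega⟩
  have hcp : c.castSucc < p := Nat.sub_lt_sub_right hb hba
  change Set.BijOn (deleteLetter 0) {π | ¬ Contains23d1 π ∧ π 0 = p ∧ π 1 = c.castSucc}
    {τ | ¬ Contains23d1 τ ∧ τ 0 = c}
  convert (bijOn_deleteLetter 0 p).subset_right (Set.subset_univ _) using 1
  ext π
  constructor
  · rintro ⟨havoid, hfirst, hsecond⟩
    have hlt : c.castSucc < π 0 := hfirst ▸ hcp
    exact ⟨hfirst, (contains23d1_deleteLetter_zero_iff (hsecond ▸ hlt)).not.2 havoid,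
      (deleteLetter_zero_apply_zero_eq_iff hlt).2 hsecond⟩
  · rintro ⟨hfirst, havoid, hhead⟩
    have hlt : c.castSucc < π 0 := hfirst ▸ hcp
    have hsecond := (deleteLetter_zero_apply_zero_eq_iff hlt).1 hhead
    exact ⟨(contains23d1_deleteLetter_zero_iff (hsecond ▸ hlt)).not.1 havoid, hfirst, hsecond⟩
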